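/- Let q be a complex-valued quadratic form on ℝ^{2n} with Re q(X) ≤ 0 for all X ∈ ℝ^{2n}, with Hamilton map F and singular space S, and assume q is elliptic on S (X ∈ S and q(X) = 0 imply X = 0). Then for every real eigenvalue λ of F, the subspace S_λ = (Ker(F − λ) ⊕ Ker(F + λ)) ∩ ℝ^{2n} is symplectic: the restriction of σ to S_λ is nondegenerate. -/

import Mathlib

open Matrix

/-- The canonical symplectic form `σ((x,ξ),(y,η)) = ξ·y − x·η` on `R^{n+n}`,
where the first `n` coordinates are `x` and the last `n` coordinates are `ξ`.
Over `R = ℂ` this is the ℂ-bilinear extension of the real canonical symplectic form. -/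
def symp {R : Type*} [CommRing R] {n : ℕ} (X Y : Fin (n + n) → R) : R :=
  ∑ i : Fin n, (X (Fin.natAdd n i) * Y (Fin.castAdd n i)
    - X (Fin.castAdd n i) * Y (Fin.natAdd n i))

/-- The canonical inclusion `ℝ^{2n} ⊆ ℂ^{2n}`. -/
def cx {n : ℕ} (X : Fin (n + n) → ℝ) : Fin (n + n) → ℂ := fun i => (X i : ℂ)

/-- The real part of a complex matrix. -/
def ReM {n : ℕ} (F : Matrix (Fin (n + n)) (Fin (n + n)) ℂ) :
    Matrix (Fin (n + n)) (Fin (n + n)) ℝ := F.map Complex.re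

/-- The imaginary part of a complex matrix. -/
def ImM {n : ℕ} (F : Matrix (Fin (n + n)) (Fin (n + n)) ℂ) :
    Matrix (Fin (n + n)) (Fin (n + n)) ℝ := F.map Complex.im

/-- The singular space `S = (⋂_{j=0}^{2n−1} Ker[Re F ∘ (Im F)^j]) ∩ ℝ^{2n}`
associated to a quadratic form with Hamilton map `F`. -/
def singularSpace {n : ℕ} (F : Matrix (Fin (n + n)) (Fin (n + n)) ℂ) :
    Set (Fin (n + n) → ℝ) :=
  {X | ∀ j < n + n, (ReM F * ImM F ^ j).mulVec X = 0}

/-- The space `S_λ = (Ker(F − λ) ⊕ Ker(F + λ)) ∩ ℝ^{2n}`: real vectors which are the sum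
of an eigenvector (or zero) of `F` for the eigenvalue `λ` and one for `−λ`. -/
def Slam {n : ℕ} (F : Matrix (Fin (n + n)) (Fin (n + n)) ℂ) (l : ℝ) :
    Set (Fin (n + n) → ℝ) :=
  {X | ∃ u v : Fin (n + n) → ℂ, F.mulVec u = (l : ℂ) • u ∧
    F.mulVec v = (-(l : ℂ)) • v ∧ cx X = u + v}

/-!
Split `F = A + iC` into its real and imaginary parts; both `σ(·, A·)` and `σ(·, C·)` are
symmetric, and `σ(·, A·) = Re q` is negative semidefinite. If `F u = λ u` with `λ` real and
`u = a + ib`, the real part of `σ(ū, F u) = λ σ(ū, u)` is `σ(a, A a) + σ(b, A b)` on the left and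
zero on the right, so both terms vanish and, by the Cauchy-Schwarz inequality, `A a = A b = 0`.
Hence `A` vanishes on `S_λ`, where therefore `F = iC`; as `F` preserves the two eigenspaces, `C`
preserves `S_λ`. So `A C^j` vanishes on `S_λ` for all `j`, and `S_λ` is contained in the singular
space. If `X ∈ S_λ` is `σ`-orthogonal to `S_λ`, then `q(X) = i σ(X, C X) = 0` because
`C X ∈ S_λ`, and ellipticity gives `X = 0`.
-/

section BilinForm

open LinearMap (BilinForm)

lemma isSymm_compRight_of_isAlt_of_skew {R M : Type*} [CommRing R] [AddCommGroup M] [Module R M]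
    {B : BilinForm R M} (hB : B.IsAlt) {f : M →ₗ[R] M} (hf : ∀ x y, B (f x) y = -B x (f y)) :
    (B.compRight f).IsSymm :=
  ⟨fun x y => by
    rw [BilinForm.compRight_apply, BilinForm.compRight_apply, ← hB.neg_eq, hf, neg_neg]⟩

variable {R M : Type*} [CommRing R] [LinearOrder R] [IsStrictOrderedRing R] [AddCommGroup M]
  [Module R M] {B : BilinForm R M} {A C : M →ₗ[R] M}

lemma apply_map_self_eq_zero_iff_of_nonpos (hB : B.SeparatingRight)
    (hA : (B.compRight A).IsSymm) (hneg : ∀ x, B x (A x) ≤ 0) {x : M} :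
    B x (A x) = 0 ↔ A x = 0 := by
  refine ⟨fun hx => hB _ fun y => ?_, fun hx => by rw [hx, map_zero]⟩
  have hker : x ∈ LinearMap.ker (-B.compRight A) :=
    (BilinForm.apply_apply_same_eq_zero_iff _ (fun z => neg_nonneg.2 (hneg z))
      (BilinForm.isSymm_iff.1 hA.neg)).1 (neg_eq_zero.2 hx)
  have hxy : B x (A y) = 0 := neg_eq_zero.1 (LinearMap.congr_fun hker y)
  exact (hA.eq y x).trans hxy

-- `ha` and `hb` are the real and imaginary parts of `(A + iC)(a + ib) = l (a + ib)`.
lemma map_re_eq_zero_and_map_im_eq_zero_of_eigenvector (hB : B.SeparatingRight) (hBalt : B.IsAlt)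
    (hA : (B.compRight A).IsSymm) (hC : (B.compRight C).IsSymm) (hneg : ∀ x, B x (A x) ≤ 0)
    {l : R} {a b : M} (ha : A a - C b = l • a) (hb : A b + C a = l • b) :
    A a = 0 ∧ A b = 0 := by
  have hBa : B a (A a) - B a (C b) = 0 := by
    rw [← map_sub, ha, map_smul, hBalt.self_eq_zero, smul_zero]
  have hBb : B b (A b) + B b (C a) = 0 := by
    rw [← map_add, hb, map_smul, hBalt.self_eq_zero, smul_zero]
  have hBC : B a (C b) = B b (C a) := hC.eq a b
  have hsum : B a (A a) + B b (A b) = 0 := by linear_combination hBa + hBb + hBC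
  have ha_zero : B a (A a) = 0 := by linarith [hsum, hneg a, hneg b]
  have hb_zero : B b (A b) = 0 := by linarith [hsum, hneg a, hneg b]
  exact ⟨(apply_map_self_eq_zero_iff_of_nonpos hB hA hneg).1 ha_zero,
    (apply_map_self_eq_zero_iff_of_nonpos hB hA hneg).1 hb_zero⟩

end BilinForm

section SympForm

variable (R : Type*) [CommRing R] (n : ℕ)

/-- The canonical symplectic form `symp`, bundled as a bilinear form so that Mathlib's theory of
alternating, symmetric and nondegenerate forms applies to it. -/
def sympForm : LinearMap.BilinForm R (Fin (n + n) → R) :=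
  LinearMap.mk₂ R symp
    (fun X Y Z => by
      simp only [symp, Pi.add_apply, ← Finset.sum_add_distrib]
      exact Finset.sum_congr rfl fun _ _ => by ring)
    (fun c X Y => by
      simp only [symp, Pi.smul_apply, smul_eq_mul, Finset.mul_sum]
      exact Finset.sum_congr rfl fun _ _ => by ring)
    (fun X Y Z => by
      simp only [symp, Pi.add_apply, ← Finset.sum_add_distrib]
      exact Finset.sum_congr rfl fun _ _ => by ring)
    (fun c X Y => by
      simp only [symp, Pi.smul_apply, smul_eq_mul, Finset.mul_sum]
      exact Finset.sum_congr rfl fun _ _ => by ring)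

variable {R n}

@[simp]
lemma sympForm_apply (X Y : Fin (n + n) → R) : sympForm R n X Y = symp X Y := rfl

variable (R n)

lemma isAlt_sympForm : (sympForm R n).IsAlt := fun X => by
  rw [sympForm_apply, symp]
  exact Finset.sum_eq_zero fun _ _ => by ring

lemma separatingRight_sympForm : (sympForm R n).SeparatingRight := by
  intro Z hZ
  have hx (i : Fin n) : Z (Fin.castAdd n i) = 0 := by
    simpa [symp, Pi.single_apply, -Fin.natAdd_eq_addNat] using hZ (Fin.append 0 (Pi.single i 1))
  have hξ (i : Fin n) : Z (Fin.natAdd n i) = 0 := by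
    simpa [symp, Pi.single_apply, -Fin.natAdd_eq_addNat] using hZ (Fin.append (Pi.single i 1) 0)
  exact funext (Fin.addCases hx hξ)

end SympForm

section RealImaginaryParts

lemma re_comp_mulVec {m k : Type*} [Fintype k] (F : Matrix m k ℂ) (u : k → ℂ) :
    Complex.re ∘ (F *ᵥ u) =
      F.map Complex.re *ᵥ (Complex.re ∘ u) - F.map Complex.im *ᵥ (Complex.im ∘ u) := by
  ext i
  simp [mulVec, dotProduct, Finset.sum_sub_distrib]

lemma im_comp_mulVec {m k : Type*} [Fintype k] (F : Matrix m k ℂ) (u : k → ℂ) :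
    Complex.im ∘ (F *ᵥ u) =
      F.map Complex.re *ᵥ (Complex.im ∘ u) + F.map Complex.im *ᵥ (Complex.re ∘ u) := by
  ext i
  simp [mulVec, dotProduct, Finset.sum_add_distrib]

variable {n : ℕ}

lemma symp_cx_cx (X Y : Fin (n + n) → ℝ) : symp (cx X) (cx Y) = (symp X Y : ℝ) := by
  simp [symp, cx]

lemma mulVec_cx (F : Matrix (Fin (n + n)) (Fin (n + n)) ℂ) (X : Fin (n + n) → ℝ) :
    F *ᵥ cx X = cx (ReM F *ᵥ X) + Complex.I • cx (ImM F *ᵥ X) := by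
  ext i
  apply Complex.ext <;> simp [mulVec, dotProduct, cx, ReM, ImM]

lemma symp_cx_mulVec_cx (F : Matrix (Fin (n + n)) (Fin (n + n)) ℂ) (X Y : Fin (n + n) → ℝ) :
    symp (cx X) (F *ᵥ cx Y) = symp X (ReM F *ᵥ Y) + Complex.I * symp X (ImM F *ᵥ Y) := by
  rw [mulVec_cx, ← sympForm_apply, map_add, map_smul, sympForm_apply, sympForm_apply, symp_cx_cx,
    symp_cx_cx, smul_eq_mul]

lemma re_symp_cx_mulVec_cx (F : Matrix (Fin (n + n)) (Fin (n + n)) ℂ) (X Y : Fin (n + n) → ℝ) :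
    (symp (cx X) (F *ᵥ cx Y)).re = symp X (ReM F *ᵥ Y) := by
  simp [symp_cx_mulVec_cx]

lemma im_symp_cx_mulVec_cx (F : Matrix (Fin (n + n)) (Fin (n + n)) ℂ) (X Y : Fin (n + n) → ℝ) :
    (symp (cx X) (F *ᵥ cx Y)).im = symp X (ImM F *ᵥ Y) := by
  simp [symp_cx_mulVec_cx]

end RealImaginaryParts

section Hamilton

variable {n : ℕ} {F : Matrix (Fin (n + n)) (Fin (n + n)) ℂ} {l : ℝ} {X : Fin (n + n) → ℝ}

lemma isSymm_compRight_ReM (hF : ((sympForm ℂ n).compRight F.mulVecLin).IsSymm) :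
    ((sympForm ℝ n).compRight (ReM F).mulVecLin).IsSymm :=
  ⟨fun X Y => by simpa [re_symp_cx_mulVec_cx] using congrArg Complex.re (hF.eq (cx X) (cx Y))⟩

lemma isSymm_compRight_ImM (hF : ((sympForm ℂ n).compRight F.mulVecLin).IsSymm) :
    ((sympForm ℝ n).compRight (ImM F).mulVecLin).IsSymm :=
  ⟨fun X Y => by simpa [im_symp_cx_mulVec_cx] using congrArg Complex.im (hF.eq (cx X) (cx Y))⟩

lemma ReM_mulVec_re_eq_zero_of_eigenvector (hF : ((sympForm ℂ n).compRight F.mulVecLin).IsSymm)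
    (hneg : ∀ X, symp X (ReM F *ᵥ X) ≤ 0) {u : Fin (n + n) → ℂ} (hu : F *ᵥ u = (l : ℂ) • u) :
    ReM F *ᵥ (Complex.re ∘ u) = 0 := by
  have hre : ReM F *ᵥ (Complex.re ∘ u) - ImM F *ᵥ (Complex.im ∘ u) = l • (Complex.re ∘ u) := by
    rw [ReM, ImM, ← re_comp_mulVec, hu]
    ext i
    simp
  have him : ReM F *ᵥ (Complex.im ∘ u) + ImM F *ᵥ (Complex.re ∘ u) = l • (Complex.im ∘ u) := by
    rw [ReM, ImM, ← im_comp_mulVec, hu]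
    ext i
    simp
  exact (map_re_eq_zero_and_map_im_eq_zero_of_eigenvector (separatingRight_sympForm ℝ n)
    (isAlt_sympForm ℝ n) (isSymm_compRight_ReM hF) (isSymm_compRight_ImM hF) hneg hre him).1

lemma ReM_mulVec_eq_zero_of_mem_Slam (hF : ((sympForm ℂ n).compRight F.mulVecLin).IsSymm)
    (hneg : ∀ X, symp X (ReM F *ᵥ X) ≤ 0) (hX : X ∈ Slam F l) : ReM F *ᵥ X = 0 := by
  obtain ⟨u, v, hu, hv, huv⟩ := hX
  have hX_re : X = Complex.re ∘ u + Complex.re ∘ v :=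
    funext fun i => congrArg Complex.re (congrFun huv i)
  have hv' : F *ᵥ v = ((-l : ℝ) : ℂ) • v := by rw [hv, Complex.ofReal_neg]
  rw [hX_re, mulVec_add, ReM_mulVec_re_eq_zero_of_eigenvector hF hneg hu,
    ReM_mulVec_re_eq_zero_of_eigenvector hF hneg hv', add_zero]

lemma ImM_mulVec_mem_Slam (hX : X ∈ Slam F l) (hker : ReM F *ᵥ X = 0) :
    ImM F *ᵥ X ∈ Slam F l := by
  obtain ⟨u, v, hu, hv, huv⟩ := hX
  have hF_cx : F *ᵥ cx X = Complex.I • cx (ImM F *ᵥ X) := by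
    rw [mulVec_cx, hker]
    ext i
    simp [cx]
  refine ⟨-Complex.I • F *ᵥ u, -Complex.I • F *ᵥ v, ?_, ?_, ?_⟩
  · rw [hu, mulVec_smul, mulVec_smul, hu, smul_comm]
  · rw [hv, mulVec_smul, mulVec_smul, hv, smul_comm]
  · rw [← smul_add, ← mulVec_add, ← huv, hF_cx, smul_smul, neg_mul, Complex.I_mul_I, neg_neg,
      one_smul]

lemma Slam_subset_singularSpace (hF : ((sympForm ℂ n).compRight F.mulVecLin).IsSymm)
    (hneg : ∀ X, symp X (ReM F *ᵥ X) ≤ 0) : Slam F l ⊆ singularSpace F := by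
  intro X hX
  have hpow (j : ℕ) : (ImM F ^ j) *ᵥ X ∈ Slam F l := by
    induction j with
    | zero => simpa using hX
    | succ k ih =>
      rw [pow_succ', ← mulVec_mulVec]
      exact ImM_mulVec_mem_Slam ih (ReM_mulVec_eq_zero_of_mem_Slam hF hneg ih)
  intro j _
  rw [← mulVec_mulVec]
  exact ReM_mulVec_eq_zero_of_mem_Slam hF hneg (hpow j)

end Hamilton

/-- Let `q` be a complex-valued quadratic form on `ℝ^{2n}` with
`Re q ≤ 0`, Hamilton map `F` and singular space `S`, and assume `q` is elliptic on
`S`. Then for every real eigenvalue `λ` of `F`, the subspace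
`S_λ = (Ker(F − λ) ⊕ Ker(F + λ)) ∩ ℝ^{2n}` is symplectic: the restriction of `σ`
to `S_λ` is nondegenerate. -/
theorem Slam_symplectic_of_elliptic_on_singularSpace
    (n : ℕ) (hn : 1 ≤ n)
    (q : (Fin (n + n) → ℂ) → ℂ)
    (F : Matrix (Fin (n + n)) (Fin (n + n)) ℂ)
    (hq : ∀ X : Fin (n + n) → ℂ, q X = symp X (F.mulVec X))
    (hskew : ∀ X Y : Fin (n + n) → ℂ, symp (F.mulVec X) Y = -symp X (F.mulVec Y))
    (hre : ∀ X : Fin (n + n) → ℝ, (q (cx X)).re ≤ 0)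
    (hell : ∀ X ∈ singularSpace F, q (cx X) = 0 → X = 0)
    (l : ℝ) (hl : ∃ v : Fin (n + n) → ℂ, v ≠ 0 ∧ F.mulVec v = (l : ℂ) • v) :
    ∀ X ∈ Slam F l, (∀ Y ∈ Slam F l, symp X Y = 0) → X = 0 := by
  have hF : ((sympForm ℂ n).compRight F.mulVecLin).IsSymm :=
    isSymm_compRight_of_isAlt_of_skew (isAlt_sympForm ℂ n) hskew
  have hneg (X : Fin (n + n) → ℝ) : symp X (ReM F *ᵥ X) ≤ 0 := by
    rw [← re_symp_cx_mulVec_cx, ← hq]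
    exact hre X
  intro X hX hortho
  have hker : ReM F *ᵥ X = 0 := ReM_mulVec_eq_zero_of_mem_Slam hF hneg hX
  have himm : symp X (ImM F *ᵥ X) = 0 := hortho _ (ImM_mulVec_mem_Slam hX hker)
  refine hell X (Slam_subset_singularSpace hF hneg hX) ?_
  rw [hq, symp_cx_mulVec_cx, hker, himm, ← sympForm_apply, map_zero]
  simp
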